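/- Let f : ℤⁿ → ℝ ∪ {+∞} be a globally discrete midpoint convex function, let α be a positive integer, and let x ∈ ℤⁿ with 0 ∈ dom f, αx ∈ dom f, and ‖x‖∞ ≥ 2. Then f(0) + f(αx) ≥ f(α⌊x/2⌋) + f(α⌈x/2⌉), where ⌊x/2⌋ and ⌈x/2⌉ denote componentwise rounding of x/2 down and up. -/

import Mathlib

/-- The ℓ∞-norm of an integer vector, as a natural number. -/
def linf {n : ℕ} (z : Fin n → ℤ) : ℕ :=
  Finset.univ.sup fun i => (z i).natAbs

/-- Componentwise round-up of (x+y)/2. -/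
def avgUp {n : ℕ} (x y : Fin n → ℤ) : Fin n → ℤ :=
  fun i => ⌈((x i + y i : ℚ)) / 2⌉

/-- Componentwise round-down of (x+y)/2. -/
def avgDown {n : ℕ} (x y : Fin n → ℤ) : Fin n → ℤ :=
  fun i => ⌊((x i + y i : ℚ)) / 2⌋

/-- A set `S ⊆ ℤⁿ` is discrete midpoint convex. -/
def DMCSet {n : ℕ} (S : Set (Fin n → ℤ)) : Prop :=
  ∀ ⦃x⦄, x ∈ S → ∀ ⦃y⦄, y ∈ S → 2 ≤ linf (x - y) →
    avgUp x y ∈ S ∧ avgDown x y ∈ S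

/-- `f` satisfies discrete midpoint convexity for the pair `(x, y)`.
Values are in `ℝ ∪ {+∞}`, modeled as `WithTop ℝ`. -/
def DMCPair {n : ℕ} (f : (Fin n → ℤ) → WithTop ℝ) (x y : Fin n → ℤ) : Prop :=
  f (avgUp x y) + f (avgDown x y) ≤ f x + f y

/-- `f` is globally discrete midpoint convex. -/
def GloballyDMC {n : ℕ} (f : (Fin n → ℤ) → WithTop ℝ) : Prop :=
  ∀ x y : Fin n → ℤ, 2 ≤ linf (x - y) → DMCPair f x y

/-- The effective domain of `f`. -/
def effDom {n : ℕ} (f : (Fin n → ℤ) → WithTop ℝ) : Set (Fin n → ℤ) :=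
  {x | f x ≠ ⊤}

/-- `f` is locally discrete midpoint convex. -/
def LocallyDMC {n : ℕ} (f : (Fin n → ℤ) → WithTop ℝ) : Prop :=
  DMCSet (effDom f) ∧ ∀ x y : Fin n → ℤ, linf (x - y) = 2 → DMCPair f x y

/-! Write `u = ⌈x/2⌉` and `d = ⌊x/2⌋`, so that `u + d = x`, and consider the grid points `i u + j d`
for `0 ≤ i, j ≤ α`. Opposite corners of a unit cell differ by `x`, and rounding their midpoint gives
the other two corners, so discrete midpoint convexity is exactly supermodularity of `f` on each unit
cell. Adding up all cells yields the inequality between the four corners of the square, provided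
`f` is finite on the grid, so that the interior terms may be cancelled.

For finiteness, replacing two points at distance at least `2` by their rounded midpoints preserves
their sum and strictly decreases the sum of squared norms. Hence a discrete midpoint convex set
contains every integer barycentre of its points: after finitely many replacements all points
coincide with the barycentre. In particular `dom f` contains the diagonal `k x`, and midpoints of
consecutive points spread membership from the diagonal to the whole grid. -/

section Grid

theorem add_le_add_of_forall_succ {M : Type*} [AddCommMonoid M] [Preorder M] [AddLeftMono M]
    {u v : ℕ → M} {m : ℕ} (hu : ∀ k < m, AddLECancellable (u k))
    (hv : ∀ k < m, AddLECancellable (v k))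
    (h : ∀ k < m, u (k + 1) + v k ≤ u k + v (k + 1)) : u m + v 0 ≤ u 0 + v m := by
  induction m with
  | zero => rfl
  | succ m ih =>
    have hm : u m + v 0 ≤ u 0 + v m := ih (fun k hk => hu k (by lia)) (fun k hk => hv k (by lia))
      fun k hk => h k (by lia)
    refine hu m m.lt_succ_self (hv m m.lt_succ_self ?_)
    calc
      v m + (u m + (u (m + 1) + v 0)) = (u m + v 0) + (u (m + 1) + v m) := by abel
      _ ≤ (u 0 + v m) + (u m + v (m + 1)) := add_le_add hm (h m m.lt_succ_self)
      _ = v m + (u m + (u 0 + v (m + 1))) := by abel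

theorem corner_add_corner_le_of_forall_cell {M : Type*} [AddCommMonoid M] [Preorder M]
    [AddLeftMono M] {F : ℕ → ℕ → M} {m : ℕ}
    (hF : ∀ i ≤ m, ∀ j ≤ m, AddLECancellable (F i j))
    (hcell : ∀ i < m, ∀ j < m, F (i + 1) j + F i (j + 1) ≤ F i j + F (i + 1) (j + 1)) :
    F m 0 + F 0 m ≤ F 0 0 + F m m := by
  have hstrip : ∀ i < m, F (i + 1) 0 + F i m ≤ F i 0 + F (i + 1) m := fun i hi => by
    rw [add_comm]
    exact add_le_add_of_forall_succ (fun j hj => hF i hi.le j hj.le)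
      (fun j hj => hF (i + 1) hi j hj.le)
      fun j hj => by rw [add_comm]; exact hcell i hi j hj
  exact add_le_add_of_forall_succ (fun i hi => hF i hi.le 0 m.zero_le)
    (fun i hi => hF i hi.le m le_rfl) hstrip

theorem forall_le_of_diagonal {Q : ℕ → ℕ → Prop} {m : ℕ} (hdiag : ∀ k ≤ m, Q k k)
    (hcell : ∀ i j, Q i j → Q (i + 1) (j + 1) → Q (i + 1) j) {i j : ℕ} (hji : j ≤ i)
    (hi : i ≤ m) : Q i j := by
  obtain ⟨d, rfl⟩ := Nat.exists_eq_add_of_le hji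
  clear hji
  induction d generalizing j with
  | zero => exact hdiag j hi
  | succ d ih =>
    have hnext : Q (j + 1 + d) (j + 1) := ih (by lia)
    rw [add_right_comm] at hnext
    exact hcell (j + d) j (ih (by lia)) hnext

end Grid

section SumOfSquares

variable {R : Type*} [CommRing R] [LinearOrder R] [IsStrictOrderedRing R] {a b c d : R}

theorem sq_add_sq_le_sq_add_sq_iff (h : a + b = c + d) :
    a ^ 2 + b ^ 2 ≤ c ^ 2 + d ^ 2 ↔ |a - b| ≤ |c - d| := by
  have hab : 2 * (a ^ 2 + b ^ 2) = (a + b) ^ 2 + (a - b) ^ 2 := by ring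
  have hcd : 2 * (c ^ 2 + d ^ 2) = (c + d) ^ 2 + (c - d) ^ 2 := by ring
  rw [← sq_le_sq, ← mul_le_mul_iff_right₀ (two_pos : (0 : R) < 2), hab, hcd, h,
    add_le_add_iff_left]

theorem sq_add_sq_lt_sq_add_sq_iff (h : a + b = c + d) :
    a ^ 2 + b ^ 2 < c ^ 2 + d ^ 2 ↔ |a - b| < |c - d| :=
  lt_iff_lt_of_le_iff_le (sq_add_sq_le_sq_add_sq_iff h.symm)

end SumOfSquares

section Barycentre

theorem le_of_sum_eq_card_nsmul {T : Multiset ℤ} {p a : ℤ} (hsum : T.sum = T.card • p)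
    (ha : a ∈ T) (hclose : ∀ b ∈ T, a ≤ b + 1) : a ≤ p := by
  by_contra! hpa
  have hle : ∀ b ∈ T, p ≤ b := fun b hb => by linarith [hclose b hb, Int.add_one_le_iff.2 hpa]
  have hlt : (T.map fun _ => p).sum < (T.map id).sum := Multiset.sum_lt_sum hle ⟨a, ha, hpa⟩
  simp [hsum] at hlt

theorem eq_of_sum_eq_card_nsmul {T : Multiset ℤ} {p a : ℤ} (hsum : T.sum = T.card • p)
    (ha : a ∈ T) (hclose : ∀ b ∈ T, |a - b| ≤ 1) : a = p := by
  refine le_antisymm (le_of_sum_eq_card_nsmul hsum ha fun b hb => ?_) (neg_le_neg_iff.1 ?_)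
  · linarith [(abs_le.1 (hclose b hb)).2]
  · refine le_of_sum_eq_card_nsmul (T := T.map Neg.neg) ?_ (Multiset.mem_map_of_mem _ ha) ?_
    · rw [Multiset.sum_map_neg, Multiset.map_id', Multiset.card_map, hsum, smul_neg]
    · refine Multiset.forall_mem_map_iff.2 fun b hb => ?_
      linarith [(abs_le.1 (hclose b hb)).1]

end Barycentre

section IntegerVectors

variable {n : ℕ}

theorem linf_le_iff {z : Fin n → ℤ} {k : ℕ} : linf z ≤ k ↔ ∀ i, |z i| ≤ k := by
  simp only [linf, Finset.sup_le_iff, Finset.mem_univ, true_imp_iff, ← Int.natCast_natAbs,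
    Nat.cast_le]

theorem lt_linf_iff {z : Fin n → ℤ} {k : ℕ} : k < linf z ↔ ∃ i, k < |z i| := by
  simp only [linf, Finset.lt_sup_iff, Finset.mem_univ, true_and, ← Int.natCast_natAbs,
    Nat.cast_lt]

theorem linf_neg (z : Fin n → ℤ) : linf (-z) = linf z := by
  simp [linf]

theorem avgUp_apply (x y : Fin n → ℤ) (i : Fin n) : avgUp x y i = (x i + y i + 1) / 2 := by
  have h : avgUp x y i = -(-(x i + y i) / 2) := by
    simpa [avgUp] using Rat.ceil_intCast_div_natCast (x i + y i) 2
  lia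

theorem avgDown_apply (x y : Fin n → ℤ) (i : Fin n) : avgDown x y i = (x i + y i) / 2 := by
  simpa [avgDown] using Rat.floor_intCast_div_natCast (x i + y i) 2

theorem avgUp_add_avgDown (x y : Fin n → ℤ) : avgUp x y + avgDown x y = x + y := by
  ext i
  simp only [Pi.add_apply, avgUp_apply, avgDown_apply]
  lia

theorem avgUp_self_add (p x : Fin n → ℤ) : avgUp p (p + x) = p + avgUp 0 x := by
  ext i
  simp only [Pi.add_apply, avgUp_apply, Pi.zero_apply]
  lia

theorem avgDown_self_add (p x : Fin n → ℤ) : avgDown p (p + x) = p + avgDown 0 x := by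
  ext i
  simp only [Pi.add_apply, avgDown_apply, Pi.zero_apply]
  lia

theorem abs_avgUp_sub_avgDown_le_one (x y : Fin n → ℤ) (i : Fin n) :
    |avgUp x y i - avgDown x y i| ≤ 1 := by
  rw [avgUp_apply, avgDown_apply, abs_le]
  lia

theorem abs_avgUp_sub_avgDown_le_abs_sub (x y : Fin n → ℤ) (i : Fin n) :
    |avgUp x y i - avgDown x y i| ≤ |x i - y i| := by
  rw [avgUp_apply, avgDown_apply, Int.abs_eq_natAbs, Int.abs_eq_natAbs]
  lia

/-- The squared Euclidean norm of an integer vector. It takes values in `ℕ` so that it can serve as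
the decreasing measure of the replacement argument in `DMCSet.exists_pairwise_linf_le_one`. -/
def sqNorm (z : Fin n → ℤ) : ℕ :=
  ∑ i, (z i).natAbs ^ 2

theorem sqNorm_avgUp_add_sqNorm_avgDown_lt {x y : Fin n → ℤ} (hxy : 2 ≤ linf (x - y)) :
    sqNorm (avgUp x y) + sqNorm (avgDown x y) < sqNorm x + sqNorm y := by
  obtain ⟨i, hi⟩ := lt_linf_iff.1 hxy
  have hsum (j) : avgUp x y j + avgDown x y j = x j + y j := congrFun (avgUp_add_avgDown x y) j
  zify [sqNorm]
  simp only [sq_abs, ← Finset.sum_add_distrib]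
  refine Finset.sum_lt_sum (fun j _ => ?_) ⟨i, Finset.mem_univ i, ?_⟩
  · exact (sq_add_sq_le_sq_add_sq_iff (hsum j)).2 (abs_avgUp_sub_avgDown_le_abs_sub x y j)
  · exact (sq_add_sq_lt_sq_add_sq_iff (hsum i)).2
      ((abs_avgUp_sub_avgDown_le_one x y i).trans_lt hi)

theorem eq_of_sum_eq_card_nsmul_of_linf_le_one {T : Multiset (Fin n → ℤ)} {p a : Fin n → ℤ}
    (hsum : T.sum = T.card • p) (ha : a ∈ T) (hclose : ∀ b ∈ T, linf (a - b) ≤ 1) : a = p := by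
  ext i
  refine eq_of_sum_eq_card_nsmul (T := T.map fun s => s i) ?_ (Multiset.mem_map_of_mem _ ha) ?_
  · rw [← Pi.multiset_sum_apply, hsum, Multiset.card_map, Pi.smul_apply]
  · exact Multiset.forall_mem_map_iff.2 fun b hb => linf_le_iff.1 (hclose b hb) i

end IntegerVectors

namespace DMCSet

variable {n : ℕ} {S : Set (Fin n → ℤ)}

theorem exists_pairwise_linf_le_one (hS : DMCSet S) (T : Multiset (Fin n → ℤ))
    (hT : ∀ s ∈ T, s ∈ S) :
    ∃ T' : Multiset (Fin n → ℤ), (∀ s ∈ T', s ∈ S) ∧ T'.card = T.card ∧ T'.sum = T.sum ∧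
      ∀ a ∈ T', ∀ b ∈ T', linf (a - b) ≤ 1 := by
  by_cases hclose : ∀ a ∈ T, ∀ b ∈ T, linf (a - b) ≤ 1
  · exact ⟨T, hT, rfl, rfl, hclose⟩
  push Not at hclose
  obtain ⟨a, ha, b, hb, hab⟩ := hclose
  have hba : b ≠ a := by
    rintro rfl
    simp [linf] at hab
  obtain ⟨U, rfl⟩ := Multiset.exists_cons_of_mem ha
  obtain ⟨V, rfl⟩ := Multiset.exists_cons_of_mem ((Multiset.mem_cons.1 hb).resolve_left hba)
  have hmid := hS (hT a ha) (hT b hb) hab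
  obtain ⟨T', hT', hcard, hsum, hclose'⟩ :=
    hS.exists_pairwise_linf_le_one (avgUp a b ::ₘ avgDown a b ::ₘ V) (by
      simp only [Multiset.forall_mem_cons] at hT ⊢
      exact ⟨hmid.1, hmid.2, hT.2.2⟩)
  refine ⟨T', hT', by simpa using hcard, ?_, hclose'⟩
  simp only [hsum, Multiset.sum_cons, ← add_assoc, avgUp_add_avgDown]
termination_by (T.map sqNorm).sum
decreasing_by
  have hlt := sqNorm_avgUp_add_sqNorm_avgDown_lt hab
  subst_vars
  simp only [Multiset.map_cons, Multiset.sum_cons]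
  lia

theorem mem_of_sum_eq_card_nsmul (hS : DMCSet S) {T : Multiset (Fin n → ℤ)} {p : Fin n → ℤ}
    (hT : ∀ s ∈ T, s ∈ S) (hT₀ : T ≠ 0) (hsum : T.sum = T.card • p) : p ∈ S := by
  obtain ⟨T', hT', hcard, hsum', hclose⟩ := hS.exists_pairwise_linf_le_one T hT
  obtain ⟨a, ha⟩ : ∃ a, a ∈ T' :=
    Multiset.card_pos_iff_exists_mem.1 (hcard ▸ Multiset.card_pos.2 hT₀)
  have hap : a = p :=
    eq_of_sum_eq_card_nsmul_of_linf_le_one (by rw [hsum', hcard, hsum]) ha (hclose a ha)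
  exact hap ▸ hT' a ha

theorem mem_of_nsmul_add_nsmul_eq (hS : DMCSet S) {a b p : Fin n → ℤ} {k l : ℕ} (ha : a ∈ S)
    (hb : b ∈ S) (hkl : k + l ≠ 0) (hp : k • a + l • b = (k + l) • p) : p ∈ S := by
  refine hS.mem_of_sum_eq_card_nsmul (T := .replicate k a + .replicate l b) ?_ ?_ ?_
  · intro s hs
    rcases Multiset.mem_add.1 hs with hs | hs <;> rwa [Multiset.eq_of_mem_replicate hs]
  · rwa [Ne, ← Multiset.card_eq_zero, Multiset.card_add, Multiset.card_replicate,
      Multiset.card_replicate]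
  · simpa using hp

theorem nsmul_mem (hS : DMCSet S) {x : Fin n → ℤ} {m k : ℕ} (h0 : 0 ∈ S) (hmx : m • x ∈ S)
    (hk : k ≤ m) : k • x ∈ S := by
  rcases Nat.eq_zero_or_pos m with rfl | hm
  · rwa [Nat.le_zero.1 hk]
  · refine hS.mem_of_nsmul_add_nsmul_eq h0 hmx (k := m - k) (l := k) (by lia) ?_
    rw [Nat.sub_add_cancel hk, smul_zero, zero_add, smul_comm]

end DMCSet

section HalfGrid

variable {n : ℕ}

/-- The point `i ⌈x/2⌉ + j ⌊x/2⌋` of the grid spanned by the two roundings of `x / 2`, which are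
encoded as the rounded midpoints of `0` and `x`. -/
def halfGrid (x : Fin n → ℤ) (i j : ℕ) : Fin n → ℤ :=
  i • avgUp 0 x + j • avgDown 0 x

theorem halfGrid_self (x : Fin n → ℤ) (k : ℕ) : halfGrid x k k = k • x := by
  rw [halfGrid, ← nsmul_add, avgUp_add_avgDown, zero_add]

theorem halfGrid_succ_left (x : Fin n → ℤ) (i j : ℕ) :
    halfGrid x (i + 1) j = halfGrid x i j + avgUp 0 x := by
  simp only [halfGrid, succ_nsmul, add_right_comm]

theorem halfGrid_succ_right (x : Fin n → ℤ) (i j : ℕ) :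
    halfGrid x i (j + 1) = halfGrid x i j + avgDown 0 x := by
  simp only [halfGrid, succ_nsmul, add_assoc]

theorem halfGrid_succ_succ (x : Fin n → ℤ) (i j : ℕ) :
    halfGrid x (i + 1) (j + 1) = halfGrid x i j + x := by
  rw [halfGrid_succ_right, halfGrid_succ_left, add_assoc, avgUp_add_avgDown, zero_add]

theorem avgUp_halfGrid (x : Fin n → ℤ) (i j : ℕ) :
    avgUp (halfGrid x i j) (halfGrid x (i + 1) (j + 1)) = halfGrid x (i + 1) j := by
  rw [halfGrid_succ_succ, avgUp_self_add, halfGrid_succ_left]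

theorem avgDown_halfGrid (x : Fin n → ℤ) (i j : ℕ) :
    avgDown (halfGrid x i j) (halfGrid x (i + 1) (j + 1)) = halfGrid x i (j + 1) := by
  rw [halfGrid_succ_succ, avgDown_self_add, halfGrid_succ_right]

theorem linf_halfGrid_sub (x : Fin n → ℤ) (i j : ℕ) :
    linf (halfGrid x i j - halfGrid x (i + 1) (j + 1)) = linf x := by
  rw [halfGrid_succ_succ, sub_add_cancel_left, linf_neg]

theorem DMCSet.halfGrid_mem {S : Set (Fin n → ℤ)} (hS : DMCSet S) {x : Fin n → ℤ}
    (hx : 2 ≤ linf x) {m : ℕ} (h0 : 0 ∈ S) (hmx : m • x ∈ S) {i j : ℕ} (hi : i ≤ m)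
    (hj : j ≤ m) : halfGrid x i j ∈ S := by
  have hdiag : ∀ k ≤ m, halfGrid x k k ∈ S := fun k hk => by
    rw [halfGrid_self]
    exact hS.nsmul_mem h0 hmx hk
  have hcell (i j : ℕ) (hp : halfGrid x i j ∈ S) (hq : halfGrid x (i + 1) (j + 1) ∈ S) :
      halfGrid x (i + 1) j ∈ S ∧ halfGrid x i (j + 1) ∈ S := by
    simpa only [avgUp_halfGrid, avgDown_halfGrid] using
      hS hp hq (hx.trans_eq (linf_halfGrid_sub x i j).symm)
  rcases le_total j i with hji | hij
  · exact forall_le_of_diagonal (Q := fun i j => halfGrid x i j ∈ S) hdiag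
      (fun i j hp hq => (hcell i j hp hq).1) hji hi
  · exact forall_le_of_diagonal (Q := fun j i => halfGrid x i j ∈ S) hdiag
      (fun j i hp hq => (hcell i j hp hq).2) hij hj

end HalfGrid

namespace GloballyDMC

variable {n : ℕ} {f : (Fin n → ℤ) → WithTop ℝ}

theorem dmcSet_effDom (h : GloballyDMC f) : DMCSet (effDom f) := fun x hx y hy hxy =>
  WithTop.add_ne_top.1 (ne_top_of_le_ne_top (WithTop.add_ne_top.2 ⟨hx, hy⟩) (h x y hxy))

theorem halfGrid_cell_le (h : GloballyDMC f) {x : Fin n → ℤ} (hx : 2 ≤ linf x) (i j : ℕ) :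
    f (halfGrid x (i + 1) j) + f (halfGrid x i (j + 1)) ≤
      f (halfGrid x i j) + f (halfGrid x (i + 1) (j + 1)) := by
  simpa only [DMCPair, avgUp_halfGrid, avgDown_halfGrid] using
    h _ _ (hx.trans_eq (linf_halfGrid_sub x i j).symm)

end GloballyDMC

/-- For a globally discrete midpoint convex function `f`, a positive integer
`α`, and `x` with `0, αx ∈ dom f` and `‖x‖∞ ≥ 2`:
`f(0) + f(αx) ≥ f(α⌊x/2⌋) + f(α⌈x/2⌉)`. -/
theorem globallyDMC_scaled_midpoint {n : ℕ} (f : (Fin n → ℤ) → WithTop ℝ)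
    (h : GloballyDMC f) (α : ℕ) (hα : 0 < α) (x : Fin n → ℤ)
    (h0 : (0 : Fin n → ℤ) ∈ effDom f) (hax : (α : ℤ) • x ∈ effDom f)
    (hx : 2 ≤ linf x) :
    f ((α : ℤ) • fun i => ⌊((x i : ℚ)) / 2⌋) +
      f ((α : ℤ) • fun i => ⌈((x i : ℚ)) / 2⌉) ≤
    f 0 + f ((α : ℤ) • x) := by
  have hdown : ((α : ℤ) • fun i => ⌊(x i : ℚ) / 2⌋) = halfGrid x 0 α := by
    ext i
    simp [halfGrid, avgDown]
  have hup : ((α : ℤ) • fun i => ⌈(x i : ℚ) / 2⌉) = halfGrid x α 0 := by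
    ext i
    simp [halfGrid, avgUp]
  have hdiag : (α : ℤ) • x = halfGrid x α α := by rw [halfGrid_self, natCast_zsmul]
  have hzero : (0 : Fin n → ℤ) = halfGrid x 0 0 := by rw [halfGrid_self, zero_nsmul]
  have hfinite : ∀ i ≤ α, ∀ j ≤ α, f (halfGrid x i j) ≠ ⊤ := fun i hi j hj =>
    h.dmcSet_effDom.halfGrid_mem hx h0 (natCast_zsmul x α ▸ hax) hi hj
  rw [hdown, hup, hdiag, hzero, add_comm]
  exact corner_add_corner_le_of_forall_cell (F := fun i j => f (halfGrid x i j))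
    (fun i hi j hj => WithTop.addLECancellable_of_ne_top (hfinite i hi j hj))
    fun i _ j _ => h.halfGrid_cell_le hx i j
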